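/- Let A be a finite-dimensional real affine space over V with dim V = n ≥ 1, let g be a symmetric bilinear form on V, and let (R_0, …, R_n) be an affine basis of A. Set D_{ij} = g(R_j − R_i, R_j − R_i) for 0 ≤ i, j ≤ n, let M be the (n+2)×(n+2) symmetric matrix with M_{ij} = (1/2)·D_{ij} for i, j ≤ n, M_{i,n+1} = M_{n+1,i} = 1 for i ≤ n, and M_{n+1,n+1} = 0, and let N be the (n+2)×(n+2) block-diagonal matrix with first block [[0,1],[1,0]] and second block −G, where G_{ij} = g(R_i − R_0, R_j − R_0) for 1 ≤ i, j ≤ n. Then M and N are congruent: there exists an invertible real (n+2)×(n+2) matrix S with Sᵀ·M·S = N. -/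

import Mathlib

/-!
Write `x k = R k - R 0` and `c k = g (x k) (x k) / 2`. With respect to the bilinear form with
matrix `M`, the vectors `e 0` and `e (n+1)` span a hyperbolic plane, and subtracting from `e k`
(`1 ≤ k ≤ n`) its projection onto that plane leaves `e k - e 0 - c k • e (n+1)`. Polarization
gives `(D k l - D k 0 - D 0 l) / 2 = -g (x k) (x l)`, so these vectors have Gram matrix `-G`.
The matrix `S` has `e 0`, `e (n+1)` and these vectors as its columns; it is invertible because
each `e k` can be recovered from them.
-/

open Matrix

/-- The matrix with columns `e 0`, `e (n+1)` and `e k - e 0 - c k • e (n+1)` for `1 ≤ k ≤ n`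
(the argument `c` is indexed from `0`). -/
noncomputable def congMat {n : ℕ} (c : Fin n → ℝ) : Matrix (Fin (n + 2)) (Fin (n + 2)) ℝ :=
  Matrix.of fun i j => (Fin.cons (Pi.single 0 1) (Fin.cons (Pi.single (Fin.last (n + 1)) 1)
    fun k : Fin n => Pi.single k.succ.castSucc 1 - Pi.single 0 1
      - c k • Pi.single (Fin.last (n + 1)) 1) : Fin (n + 2) → Fin (n + 2) → ℝ) j i

lemma congMat_col_zero {n : ℕ} (c : Fin n → ℝ) :
    (congMat c).col 0 = Pi.single 0 1 := by
  ext i; simp [congMat]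

lemma congMat_col_one {n : ℕ} (c : Fin n → ℝ) :
    (congMat c).col (Fin.succ 0) = Pi.single (Fin.last (n + 1)) 1 := by
  ext i; simp only [congMat, Matrix.col_apply, Matrix.of_apply, Fin.cons_succ, Fin.cons_zero]

lemma congMat_col_succ {n : ℕ} (c : Fin n → ℝ) (k : Fin n) :
    (congMat c).col k.succ.succ = Pi.single k.succ.castSucc 1 - Pi.single 0 1
      - c k • Pi.single (Fin.last (n + 1)) 1 := by
  ext i; simp only [congMat, Matrix.col_apply, Matrix.of_apply, Fin.cons_succ]

lemma isUnit_congMat {n : ℕ} (c : Fin n → ℝ) : IsUnit (congMat c) := by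
  -- Every standard basis vector lies in the range of `congMat c`.
  have h : ∀ j, ∃ v, congMat c *ᵥ v = Pi.single j 1 := by
    intro j
    refine Fin.lastCases ?_ (fun j => Fin.cases ?_ (fun k => ?_) j) j
    · exact ⟨Pi.single (Fin.succ 0) 1, by rw [mulVec_single_one, congMat_col_one]⟩
    · exact ⟨Pi.single 0 1, by rw [mulVec_single_one, congMat_col_zero]; rfl⟩
    · refine ⟨Pi.single k.succ.succ 1 + Pi.single 0 1 + c k • Pi.single (Fin.succ 0) 1, ?_⟩
      rw [mulVec_add, mulVec_add, mulVec_smul, mulVec_single_one, mulVec_single_one,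
        mulVec_single_one, congMat_col_zero, congMat_col_one, congMat_col_succ]
      abel
  choose v hv using h
  refine IsUnit.of_mul_eq_one (Matrix.of fun i j => v j i) ?_
  ext i j
  have := congrFun (hv j) i
  rw [Matrix.one_apply, Matrix.mul_apply]
  simpa [Matrix.mulVec, dotProduct, Pi.single_apply] using this

lemma congMat_conj_apply {n : ℕ} (c : Fin n → ℝ) (M : Matrix (Fin (n + 2)) (Fin (n + 2)) ℝ)
    (i j : Fin (n + 2)) :
    ((congMat c)ᵀ * M * congMat c) i j = (congMat c).col i ⬝ᵥ (M *ᵥ (congMat c).col j) := by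
  rw [Matrix.mul_assoc, Matrix.mul_apply]
  simp [dotProduct, Matrix.mulVec, Matrix.mul_apply]

/-- Let `(R_0, …, R_n)` (`n ≥ 1`) be an affine basis of an
`n`-dimensional real affine space `A`, `g` a symmetric bilinear form on `V`, and
`D i j = g(R_j − R_i, R_j − R_i)`.  The bordered `(n+2)×(n+2)` matrix `M` with
`(1/2)·D` in the corner, ones in the last row/column and `0` in the last diagonal
entry is congruent to the block-diagonal matrix `N = [[0,1],[1,0]] ⊕ (−G)`, where
`G i j = g(R_i − R_0, R_j − R_0)` for `1 ≤ i, j ≤ n`. -/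
theorem stmt14 {V A : Type*} [AddCommGroup V] [Module ℝ V] [AddTorsor V A]
    [FiniteDimensional ℝ V] {n : ℕ} (hn1 : 1 ≤ n)
    (hn : Module.finrank ℝ V = n) (b : AffineBasis (Fin (n + 1)) ℝ A)
    (g : LinearMap.BilinForm ℝ V) (hgs : ∀ x y, g x y = g y x) :
    ∃ S : Matrix (Fin (n + 2)) (Fin (n + 2)) ℝ, IsUnit S ∧
      S.transpose *
        (Matrix.of fun i j : Fin (n + 2) =>
          if hi : (i : ℕ) < n + 1 then
            if hj : (j : ℕ) < n + 1 then
              (1/2 : ℝ) * g (b ⟨(j : ℕ), hj⟩ -ᵥ b ⟨(i : ℕ), hi⟩)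
                (b ⟨(j : ℕ), hj⟩ -ᵥ b ⟨(i : ℕ), hi⟩)
            else 1
          else if (j : ℕ) < n + 1 then 1 else 0) * S =
      Matrix.of fun i j : Fin (n + 2) =>
        if ((i : ℕ) = 0 ∧ (j : ℕ) = 1) ∨ ((i : ℕ) = 1 ∧ (j : ℕ) = 0) then (1 : ℝ)
        else if 2 ≤ (i : ℕ) ∧ 2 ≤ (j : ℕ) then
          -g (b ⟨(i : ℕ) - 1, by have := i.isLt; omega⟩ -ᵥ b 0)
            (b ⟨(j : ℕ) - 1, by have := j.isLt; omega⟩ -ᵥ b 0)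
        else 0 := by
  -- `c k` is half of `D 0 (k+1)`, as forced by orthogonality to `e 0`.
  refine ⟨congMat fun k => (1/2 : ℝ) * g (b k.succ -ᵥ b 0) (b k.succ -ᵥ b 0),
    isUnit_congMat _, ?_⟩
  have key : ∀ p q : A, g (p -ᵥ q) (p -ᵥ q) = g (p -ᵥ b 0) (p -ᵥ b 0)
      - 2 * g (p -ᵥ b 0) (q -ᵥ b 0) + g (q -ᵥ b 0) (q -ᵥ b 0) := by
    intro p q
    rw [← vsub_sub_vsub_cancel_right p q (b 0)]
    simp only [map_sub, LinearMap.sub_apply]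
    rw [hgs (q -ᵥ b 0) (p -ᵥ b 0)]
    ring
  have hflip : ∀ p : A, g (b 0 -ᵥ p) (b 0 -ᵥ p) = g (p -ᵥ b 0) (p -ᵥ b 0) := by
    intro p
    rw [key (b 0) p]
    simp
  have hz : ∀ h, (⟨0, h⟩ : Fin (n + 1)) = 0 := fun _ => rfl
  have hs : ∀ (k : Fin n) h, (⟨(k : ℕ) + 1, h⟩ : Fin (n + 1)) = k.succ := fun _ _ => rfl
  ext i j
  rw [congMat_conj_apply]
  refine Fin.cases ?_ (fun i => Fin.cases ?_ (fun k => ?_) i) i <;>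
  refine Fin.cases ?_ (fun j => Fin.cases ?_ (fun l => ?_) j) j <;>
  simp only [congMat_col_zero, congMat_col_one, congMat_col_succ, mulVec_sub, mulVec_smul,
    mulVec_single_one, sub_dotProduct, dotProduct_sub, smul_dotProduct, dotProduct_smul,
    single_one_dotProduct, Matrix.col_apply, Matrix.of_apply, smul_eq_mul] <;>
  simp [hz, hs, hflip]
  rw [key, hgs (b l.succ -ᵥ b 0) (b k.succ -ᵥ b 0)]
  ring
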